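/- Let a and b be positive divisors of d with a dividing b, and let u, v be integers satisfying gcd(u, v, d/a) = 1, u·a·b ≡ a·b (mod d), and gcd(u, d/a, d/b) = 1. Then there exists a unitary matrix W on ℂ^d with W X^a W† ≈ X^{ua} Z^{va} and W Z^b W† ≈ Z^b. -/

import Mathlib

open Matrix

/-- The primitive `d`-th root of unity `ω = e^{2πi/d}`. -/
noncomputable def omega (d : ℕ) : ℂ := Complex.exp (2 * Real.pi * Complex.I / d)

/-- The power `X^s` (for any integer `s`) of the shift matrix `X` on `ℂ^d`,
`X|j⟩ = |j+1 mod d⟩`; its `(i,j)` entry is `1` iff `i ≡ j + s (mod d)`. -/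
def Xpow (d : ℕ) (s : ℤ) : Matrix (Fin d) (Fin d) ℂ :=
  Matrix.of fun i j => if (i : ℤ) = (((j : ℕ) : ℤ) + s) % (d : ℤ) then (1 : ℂ) else 0

/-- The power `Z^t` (for any integer `t`) of the clock matrix `Z` on `ℂ^d`,
`Z|j⟩ = ω^j |j⟩`; it is diagonal with entries `ω^{t·j} = e^{2πi·t·j/d}`. -/
noncomputable def Zpow (d : ℕ) (t : ℤ) : Matrix (Fin d) (Fin d) ℂ :=
  Matrix.diagonal fun j => Complex.exp (2 * Real.pi * Complex.I * (t : ℂ) * ((j : ℕ) : ℂ) / (d : ℂ))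

/-- The generalized Pauli matrix `X^s Z^t` on `ℂ^d`. -/
noncomputable def GPM (d : ℕ) (s t : ℤ) : Matrix (Fin d) (Fin d) ℂ :=
  Xpow d s * Zpow d t

/-- `A ≈ B` : equality up to a unimodular (global phase) scalar. -/
def PhaseEq {n : Type*} (A B : Matrix n n ℂ) : Prop :=
  ∃ c : ℂ, ‖c‖ = 1 ∧ A = c • B

/-- The `2d`-th root of unity `e^{πi/d}`, a square root of `omega d`. -/
noncomputable def halfRoot (d : ℕ) : ℂ := Complex.exp (2 * Real.pi * Complex.I / (2 * d : ℕ))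

lemma halfRoot_isPrimitiveRoot {d : ℕ} (hd : d ≠ 0) : IsPrimitiveRoot (halfRoot d) (2 * d) :=
  Complex.isPrimitiveRoot_exp _ (by omega)

lemma halfRoot_ne_zero (d : ℕ) : halfRoot d ≠ 0 := Complex.exp_ne_zero _

lemma halfRoot_zpow_eq_one_iff {d : ℕ} (hd : d ≠ 0) (n : ℤ) :
    halfRoot d ^ n = 1 ↔ 2 * (d : ℤ) ∣ n := by
  simpa using (halfRoot_isPrimitiveRoot hd).zpow_eq_one_iff_dvd n

lemma halfRoot_zpow_congr {d : ℕ} (hd : d ≠ 0) {m n : ℤ} (h : 2 * (d : ℤ) ∣ m - n) :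
    halfRoot d ^ m = halfRoot d ^ n := by
  have h' := (halfRoot_zpow_eq_one_iff hd _).2 h
  rwa [zpow_sub₀ (halfRoot_ne_zero d), div_eq_one_iff_eq (zpow_ne_zero _ (halfRoot_ne_zero d))] at h'

lemma norm_halfRoot_zpow {d : ℕ} (hd : d ≠ 0) (n : ℤ) : ‖halfRoot d ^ n‖ = 1 := by
  rw [norm_zpow, (halfRoot_isPrimitiveRoot hd).norm'_eq_one (by omega), _root_.one_zpow]

lemma star_halfRoot_zpow {d : ℕ} (hd : d ≠ 0) (n : ℤ) :
    star (halfRoot d ^ n) = halfRoot d ^ (-n) := by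
  rw [_root_.zpow_neg, Complex.inv_eq_conj (norm_halfRoot_zpow hd n)]
  rfl

lemma Zpow_eq_diagonal_halfRoot {d : ℕ} (hd : d ≠ 0) (t : ℤ) :
    Zpow d t = diagonal fun j : Fin d => halfRoot d ^ (2 * t * (j : ℕ)) := by
  unfold Zpow halfRoot
  congr 1
  funext j
  rw [← Complex.exp_int_mul]
  congr 1
  have : (d : ℂ) ≠ 0 := by exact_mod_cast hd
  push_cast
  field_simp

lemma Fin.sum_ite_modEq {d : ℕ} (hd : d ≠ 0) {M : Type*} [AddCommMonoid M] (f : ℤ → M)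
    (hf : ∀ x y : ℤ, x ≡ y [ZMOD d] → f x = f y) (x : ℤ) :
    (∑ l : Fin d, if ((l : ℕ) : ℤ) ≡ x [ZMOD d] then f (l : ℕ) else 0) = f x := by
  have hpos : (0 : ℤ) < d := by omega
  have h0 := Int.emod_nonneg x hpos.ne'
  have h1 := Int.emod_lt_of_pos x hpos
  have hx : ((x % d).toNat : ℤ) = x % d := Int.toNat_of_nonneg h0
  rw [Finset.sum_eq_single (⟨(x % d).toNat, by omega⟩ : Fin d)]
  · have hmod : x % d ≡ x [ZMOD d] := Int.mod_modEq x d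
    simp only [hx, hmod, if_true]
    exact hf _ _ hmod
  · intro l _ hl
    refine if_neg fun hc => hl (Fin.ext ?_)
    have hlt : ((l : ℕ) : ℤ) < d := by exact_mod_cast l.2
    have : ((l : ℕ) : ℤ) % d = x % d := hc
    rw [Int.emod_eq_of_lt (by omega) hlt] at this
    simp only
    omega
  · simp

lemma Xpow_apply {d : ℕ} (s : ℤ) (i j : Fin d) :
    Xpow d s i j = if ((i : ℕ) : ℤ) ≡ (j : ℕ) + s [ZMOD d] then 1 else 0 := by
  have hlt : ((i : ℕ) : ℤ) < d := by exact_mod_cast i.2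
  refine if_congr ?_ rfl rfl
  rw [Int.ModEq, Int.emod_eq_of_lt (by omega) hlt]

/-- The phase picked up by `|j⟩` under the `t`-th power of the multiple of `X^{ua} Z^{va}` whose
`D`-th power is the identity, where `d = a * D`. -/
noncomputable def chainPhase (d : ℕ) (a D u v t j : ℤ) : ℂ :=
  halfRoot d ^ (v * a * (2 * j * t + u * a * (t * (t - D))))

/-- Entry `(i, c)` of the intertwiner: the column `c = s + a * t` is the image of the uniform
superposition of the `|J s k⟩`, `k < h`, under the `t`-th power of the multiple of
`X^{ua} Z^{va}` described in `chainPhase`. -/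
noncomputable def chainEntry (d : ℕ) (a D u v : ℤ) (h : ℕ) (J : ℤ → ℕ → ℤ) (i c : ℤ) : ℂ :=
  ((√(h : ℝ) : ℝ) : ℂ)⁻¹ * ∑ k ∈ Finset.range h,
    if i ≡ J (c % a) k + u * (a * (c / a)) [ZMOD d] then
      chainPhase d a D u v (c / a) (J (c % a) k) else 0

lemma chainEntry_congr_left {d : ℕ} (a D u v : ℤ) (h : ℕ) (J : ℤ → ℕ → ℤ) (c : ℤ) {i i' : ℤ}
    (hi : i ≡ i' [ZMOD d]) :
    chainEntry d a D u v h J i c = chainEntry d a D u v h J i' c := by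
  unfold chainEntry
  congr 1
  refine Finset.sum_congr rfl fun k _ => ?_
  simp only [show ∀ y, (i ≡ y [ZMOD d]) ↔ (i' ≡ y [ZMOD d]) from
    fun y => ⟨hi.symm.trans, hi.trans⟩]

lemma chainEntry_congr_right {d : ℕ} (hd : d ≠ 0) {a D : ℤ} (ha : a ≠ 0) (hD : (d : ℤ) = a * D)
    (u v : ℤ) (h : ℕ) (J : ℤ → ℕ → ℤ) (i : ℤ) {c c' : ℤ} (hc : c ≡ c' [ZMOD d]) :
    chainEntry d a D u v h J i c = chainEntry d a D u v h J i c' := by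
  obtain ⟨n, hn⟩ := hc.symm.dvd
  obtain rfl : c = c' + a * (D * n) := by rw [← mul_assoc, ← hD]; linarith
  unfold chainEntry
  rw [Int.add_mul_emod_self_left, Int.add_mul_ediv_left _ _ ha]
  congr 1
  refine Finset.sum_congr rfl fun k _ => ?_
  set t := c' / a
  set j := J (c' % a) k
  have hmod : j + u * (a * (t + D * n)) ≡ j + u * (a * t) [ZMOD d] := by
    apply Int.ModEq.symm
    rw [Int.modEq_iff_dvd]
    exact ⟨u * n, by rw [hD]; ring⟩
  have hph : chainPhase d a D u v (t + D * n) j = chainPhase d a D u v t j := by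
    refine halfRoot_zpow_congr hd ?_
    obtain ⟨m, hm⟩ : (2 : ℤ) ∣ n * (n - 1) := (Int.even_mul_pred_self n).two_dvd
    refine ⟨v * (j * n + u * a * (t * n + D * m)), ?_⟩
    rw [hD]
    linear_combination (v * a * u * a * D * D) * hm
  simp only [hph, show (i ≡ j + u * (a * (t + D * n)) [ZMOD d]) ↔
    (i ≡ j + u * (a * t) [ZMOD d]) from ⟨fun e => e.trans hmod, fun e => e.trans hmod.symm⟩]

lemma chainEntry_add {d : ℕ} (hd : d ≠ 0) {a : ℤ} (D : ℤ) (ha : a ≠ 0)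
    (u v : ℤ) (h : ℕ) (J : ℤ → ℕ → ℤ) (i c : ℤ) :
    chainEntry d a D u v h J i (c + a) = halfRoot d ^ (v * a * (u * a * (1 - D))) *
      (halfRoot d ^ (2 * (v * a) * (i - u * a)) * chainEntry d a D u v h J (i - u * a) c) := by
  unfold chainEntry
  rw [Int.add_emod_right, Int.add_ediv_of_dvd_right (dvd_refl a), Int.ediv_self ha,
    mul_left_comm _ (((√(h : ℝ) : ℝ) : ℂ)⁻¹), mul_left_comm _ (((√(h : ℝ) : ℝ) : ℂ)⁻¹)]
  congr 1
  rw [Finset.mul_sum, Finset.mul_sum]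
  refine Finset.sum_congr rfl fun k _ => ?_
  set t := c / a
  set j := J (c % a) k
  have hiff : (i ≡ j + u * (a * (t + 1)) [ZMOD d]) ↔ (i - u * a ≡ j + u * (a * t) [ZMOD d]) := by
    rw [Int.modEq_iff_dvd, Int.modEq_iff_dvd,
      show j + u * (a * (t + 1)) - i = j + u * (a * t) - (i - u * a) by ring]
  simp only [hiff]
  split_ifs with hi
  · unfold chainPhase
    rw [← zpow_add₀ (halfRoot_ne_zero d), ← zpow_add₀ (halfRoot_ne_zero d)]
    refine halfRoot_zpow_congr hd ?_
    obtain ⟨n, hn⟩ := hi.dvd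
    refine ⟨v * a * n, ?_⟩
    linear_combination 2 * v * a * hn
  · simp

lemma chainEntry_mul_root {d : ℕ} (hd : d ≠ 0) {a b E : ℤ} (D : ℤ) {u : ℤ} (v : ℤ) (h : ℕ)
    {J : ℤ → ℕ → ℤ} (hbE : (d : ℤ) = b * E)
    (hu : u * a * b ≡ a * b [ZMOD d]) (hJ : ∀ s k, E ∣ J s k - s) (i c : ℤ) :
    chainEntry d a D u v h J i c * halfRoot d ^ (2 * b * c) =
      halfRoot d ^ (2 * b * i) * chainEntry d a D u v h J i c := by
  unfold chainEntry
  rw [mul_assoc, mul_left_comm (halfRoot d ^ (2 * b * i))]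
  congr 1
  rw [Finset.sum_mul, Finset.mul_sum]
  refine Finset.sum_congr rfl fun k _ => ?_
  split_ifs with hi
  · rw [mul_comm]
    congr 1
    refine halfRoot_zpow_congr hd ?_
    obtain ⟨n, hn⟩ := hi.dvd
    obtain ⟨m, hm⟩ := hu.dvd
    obtain ⟨l, hl⟩ := hJ (c % a) k
    have hc := Int.emod_add_mul_ediv c a
    refine ⟨b * n - l + m * (c / a), ?_⟩
    linear_combination (2 * b) * hn - 2 * b * hl + 2 * (c / a) * hm - 2 * b * hc + 2 * l * hbE
  · simp

lemma sum_star_chainEntry_mul {d : ℕ} (hd : d ≠ 0) (a D u v : ℤ) (h : ℕ) (J : ℤ → ℕ → ℤ)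
    (c c' : ℤ) :
    ∑ i : Fin d, star (chainEntry d a D u v h J (i : ℕ) c) * chainEntry d a D u v h J (i : ℕ) c' =
      (h : ℂ)⁻¹ * ∑ k ∈ Finset.range h, ∑ k' ∈ Finset.range h,
        if J (c % a) k + u * (a * (c / a)) ≡ J (c' % a) k' + u * (a * (c' / a)) [ZMOD d] then
          star (chainPhase d a D u v (c / a) (J (c % a) k)) *
            chainPhase d a D u v (c' / a) (J (c' % a) k') else 0 := by
  have hsq : star ((√(h : ℝ) : ℝ) : ℂ)⁻¹ * ((√(h : ℝ) : ℝ) : ℂ)⁻¹ = (h : ℂ)⁻¹ := by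
    rw [star_inv₀, show star ((√(h : ℝ) : ℝ) : ℂ) = ((√(h : ℝ) : ℝ) : ℂ) from Complex.conj_ofReal _,
      ← mul_inv, ← Complex.ofReal_mul, Real.mul_self_sqrt (Nat.cast_nonneg h),
      Complex.ofReal_natCast]
  unfold chainEntry
  simp only [star_mul', star_sum]
  simp_rw [mul_mul_mul_comm _ _ (((√(h : ℝ) : ℝ) : ℂ)⁻¹), hsq]
  rw [← Finset.mul_sum]
  congr 1
  simp_rw [Finset.sum_mul_sum]
  rw [Finset.sum_comm]
  refine Finset.sum_congr rfl fun k _ => ?_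
  rw [Finset.sum_comm]
  refine Finset.sum_congr rfl fun k' _ => ?_
  set x := J (c % a) k + u * (a * (c / a))
  set y := J (c' % a) k' + u * (a * (c' / a))
  rw [← Fin.sum_ite_modEq hd (fun z => if z ≡ y [ZMOD d] then
          star (chainPhase d a D u v (c / a) (J (c % a) k)) *
            chainPhase d a D u v (c' / a) (J (c' % a) k') else 0)
    (fun z w hzw => by
      simp only [show (z ≡ y [ZMOD d]) ↔ (w ≡ y [ZMOD d]) from ⟨hzw.symm.trans, hzw.trans⟩]) x]
  refine Finset.sum_congr rfl fun i _ => ?_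
  split_ifs <;> simp

/-- A geometric sum of a nontrivial root of unity vanishes. -/
lemma geom_sum_eq_zero_of_pow_eq_one {K : Type*} [Field K] {q : K} {n : ℕ} (hq : q ≠ 1)
    (hn : q ^ n = 1) : ∑ k ∈ Finset.range n, q ^ k = 0 := by
  rw [geom_sum_eq hq, hn, sub_self, zero_div]

lemma sum_star_chainEntry_mul_eq_ite {d : ℕ} (hd : d ≠ 0) {a D u v e : ℤ} {h : ℕ}
    {J : ℤ → ℕ → ℤ} (ha : 0 < a) (hD : (d : ℤ) = a * D) (hh : h ≠ 0)
    (hhu : (h : ℤ) ∣ u) (hhD : (h : ℤ) ∣ D) (hgcd : ∀ n, D ∣ u * n → D ∣ h * n)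
    (hcop : IsCoprime (v * e) (h : ℤ)) (hJ : ∀ s k, J s k = J s 0 + e * k)
    (hinj : ∀ s s' : ℤ, ∀ k k' : ℕ, 0 ≤ s → s < a → 0 ≤ s' → s' < a → k < h → k' < h →
      a * h ∣ J s' k' - J s k → s = s' ∧ k = k')
    {c c' : ℤ} (hc0 : 0 ≤ c) (hc : c < d) (hc'0 : 0 ≤ c') (hc' : c' < d) :
    ∑ i : Fin d, star (chainEntry d a D u v h J (i : ℕ) c) * chainEntry d a D u v h J (i : ℕ) c' =
      if c = c' then 1 else 0 := by
  rw [sum_star_chainEntry_mul hd]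
  have hs0 := Int.emod_nonneg c ha.ne'
  have hs := Int.emod_lt_of_pos c ha
  have hs'0 := Int.emod_nonneg c' ha.ne'
  have hs' := Int.emod_lt_of_pos c' ha
  have hcc := Int.emod_add_mul_ediv c a
  have hcc' := Int.emod_add_mul_ediv c' a
  have ht0 : 0 ≤ c / a := Int.ediv_nonneg hc0 ha.le
  have ht'0 : 0 ≤ c' / a := Int.ediv_nonneg hc'0 ha.le
  have ht : c / a < D := Int.ediv_lt_of_lt_mul ha (by rw [mul_comm, ← hD]; exact hc)
  have ht' : c' / a < D := Int.ediv_lt_of_lt_mul ha (by rw [mul_comm, ← hD]; exact hc')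
  set s := c % a
  set s' := c' % a
  set t := c / a
  set t' := c' / a
  have hred : ∀ k k' : ℕ, k < h → k' < h →
      J s k + u * (a * t) ≡ J s' k' + u * (a * t') [ZMOD d] → s = s' ∧ k = k' := by
    intro k k' hk hk' hmod
    refine hinj s s' k k' hs0 hs hs'0 hs' hk hk' ?_
    obtain ⟨n, hn⟩ := hmod.dvd
    obtain ⟨u₁, hu₁⟩ := hhu
    obtain ⟨D₁, hD₁⟩ := hhD
    refine ⟨D₁ * n - u₁ * (t' - t), ?_⟩
    linear_combination hn + n * hD + n * a * hD₁ - a * (t' - t) * hu₁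
  have hh' : (h : ℂ) ≠ 0 := by exact_mod_cast hh
  by_cases hss : s = s'
  swap
  · rw [if_neg fun hEq => hss (by simp only [s, s', hEq]), Finset.sum_eq_zero, mul_zero]
    intro k hk
    refine Finset.sum_eq_zero fun k' hk' => if_neg fun hmod => hss ?_
    exact (hred k k' (Finset.mem_range.1 hk) (Finset.mem_range.1 hk') hmod).1
  rw [← hss]
  have hdiag : ∀ k ∈ Finset.range h, (∑ k' ∈ Finset.range h,
      if J s k + u * (a * t) ≡ J s k' + u * (a * t') [ZMOD d] then
        star (chainPhase d a D u v t (J s k)) * chainPhase d a D u v t' (J s k') else 0) =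
      if D ∣ u * (t' - t) then halfRoot d ^ (v * a * (2 * J s 0 * (t' - t) +
        u * a * (t' * (t' - D) - t * (t - D)))) * (halfRoot d ^ (2 * v * a * e * (t' - t))) ^ k
        else 0 := by
    intro k hk
    rw [Finset.sum_eq_single_of_mem k hk]
    · have hiff : (J s k + u * (a * t) ≡ J s k + u * (a * t') [ZMOD d]) ↔ D ∣ u * (t' - t) := by
        rw [Int.modEq_iff_dvd, hD, ← mul_dvd_mul_iff_left ha.ne' (b := D),
          show J s k + u * (a * t') - (J s k + u * (a * t)) = a * (u * (t' - t)) by ring]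
      simp only [hiff]
      congr 1
      unfold chainPhase
      rw [star_halfRoot_zpow hd, ← zpow_natCast, ← _root_.zpow_mul, ← zpow_add₀ (halfRoot_ne_zero d),
        ← zpow_add₀ (halfRoot_ne_zero d), hJ s k]
      congr 1
      ring
    · intro k' hk' hne
      refine if_neg fun hmod => hne ?_
      exact (hred k k' (Finset.mem_range.1 hk) (Finset.mem_range.1 hk') (hss ▸ hmod)).2.symm
  rw [Finset.sum_congr rfl hdiag]
  by_cases hEq : c = c'
  · have htt : t' = t := by simp only [t, t', hEq]
    simp [htt, hEq, hh']
  rw [if_neg hEq]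
  have htt : t ≠ t' := fun e => hEq (by rw [← hcc, ← hcc', hss, e])
  by_cases hdvd : D ∣ u * (t' - t)
  swap
  · simp [hdvd]
  simp only [hdvd, if_true]
  rw [← Finset.mul_sum, geom_sum_eq_zero_of_pow_eq_one, mul_zero, mul_zero]
  · rw [Ne, halfRoot_zpow_eq_one_iff hd]
    rintro ⟨n, hn⟩
    have hve : D ∣ (v * e) * (t' - t) := by
      refine ⟨n, mul_left_cancel₀ (mul_ne_zero two_ne_zero ha.ne') ?_⟩
      linear_combination hn + 2 * n * hD
    obtain ⟨x, y, hxy⟩ := hcop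
    have hdiv : D ∣ t' - t := by
      have := (hve.mul_left x).add ((hgcd _ hdvd).mul_left y)
      rwa [show x * (v * e * (t' - t)) + y * (h * (t' - t)) =
        (x * (v * e) + y * h) * (t' - t) by ring, hxy, one_mul] at this
    have := Int.eq_zero_of_abs_lt_dvd hdiv (by rw [abs_lt]; constructor <;> omega)
    omega
  · rw [← zpow_natCast, ← _root_.zpow_mul, halfRoot_zpow_eq_one_iff hd]
    obtain ⟨n, hn⟩ := hgcd _ hdvd
    refine ⟨v * e * n, ?_⟩
    linear_combination 2 * v * a * e * hn - 2 * v * e * n * hD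

/-- If `g ∣ a` and `e ≡ g (mod a h)`, the labels `s + e (k + (h - 1) ⌊s / g⌋)` with `0 ≤ s < a` and
`k < h` are pairwise incongruent modulo `a h`. -/
lemma label_injective {a g e : ℤ} {h : ℕ} (hg : 0 < g) (hga : g ∣ a) (he : a * h ∣ e - g)
    {s s' : ℤ} {k k' : ℕ} (hs0 : 0 ≤ s) (hs : s < a) (hs'0 : 0 ≤ s') (hs' : s' < a)
    (hk : k < h) (hk' : k' < h)
    (hdvd : a * h ∣ s' + e * (k' + (h - 1) * (s' / g)) - (s + e * (k + (h - 1) * (s / g)))) :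
    s = s' ∧ k = k' := by
  obtain ⟨m, rfl⟩ := hga
  have hsg := Int.emod_add_mul_ediv s g
  have hsg' := Int.emod_add_mul_ediv s' g
  have hr0 := Int.emod_nonneg s hg.ne'
  have hr := Int.emod_lt_of_pos s hg
  have hr'0 := Int.emod_nonneg s' hg.ne'
  have hr' := Int.emod_lt_of_pos s' hg
  have hq0 : 0 ≤ s / g := Int.ediv_nonneg hs0 hg.le
  have hq'0 : 0 ≤ s' / g := Int.ediv_nonneg hs'0 hg.le
  have hq : s / g < m := Int.ediv_lt_of_lt_mul hg (by rwa [mul_comm])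
  have hq' : s' / g < m := Int.ediv_lt_of_lt_mul hg (by rwa [mul_comm])
  have hrange : ∀ (r q : ℤ) (k : ℕ), 0 ≤ r → r < g → 0 ≤ q → q < m → k < h →
      0 ≤ r + g * (k + h * q) ∧ r + g * (k + h * q) < g * m * h := by
    intro r q k h0 h1 h2 h3 h4
    have h4' : (k : ℤ) + 1 ≤ h := by exact_mod_cast h4
    have h5 : (k : ℤ) + h * q + 1 ≤ m * h := by nlinarith
    constructor
    · positivity
    · nlinarith
  have h1 := hrange _ _ k hr0 hr hq0 hq hk
  have h2 := hrange _ _ k' hr'0 hr' hq'0 hq' hk'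
  have hdvd' : g * m * h ∣ (s' % g + g * (k' + h * (s' / g))) -
      (s % g + g * (k + h * (s / g))) := by
    have := hdvd.sub (he.mul_right ((k' + (h - 1) * (s' / g)) - (k + (h - 1) * (s / g))))
    refine this.trans (dvd_of_eq ?_)
    linear_combination hsg - hsg'
  have hz := Int.eq_zero_of_abs_lt_dvd hdvd'
    (by rw [abs_lt]; constructor <;> linarith [h1.1, h1.2, h2.1, h2.2])
  have hrr : s % g = s' % g := by
    have h3 : (s % g + g * (k + h * (s / g))) % g = s % g := by
      rw [Int.add_mul_emod_self_left, Int.emod_emod]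
    have h4 : (s' % g + g * (k' + h * (s' / g))) % g = s' % g := by
      rw [Int.add_mul_emod_self_left, Int.emod_emod]
    rw [← h3, ← h4, sub_eq_zero.1 hz]
  have hkk : (k : ℤ) + h * (s / g) = k' + h * (s' / g) := by
    apply mul_left_cancel₀ hg.ne'
    linarith
  have hk_eq : (k : ℤ) = k' := by
    have := congrArg (· % (h : ℤ)) hkk
    simp only [Int.add_mul_emod_self_left] at this
    rwa [Int.emod_eq_of_lt (by omega) (by omega), Int.emod_eq_of_lt (by omega) (by omega)] at this
  have hh : (h : ℤ) ≠ 0 := by omega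
  have hqq : s / g = s' / g := mul_left_cancel₀ hh (by linarith)
  exact ⟨by rw [← hsg, ← hsg', hrr, hqq], by exact_mod_cast hk_eq⟩

lemma mul_conjTranspose_phaseEq {n : Type*} [Fintype n] [DecidableEq n] {W A B : Matrix n n ℂ}
    (hW : W ∈ Matrix.unitaryGroup n ℂ) {c : ℂ} (hc : ‖c‖ = 1) (h : W * A = c • (B * W)) :
    PhaseEq (W * A * Wᴴ) B := by
  refine ⟨c, hc, ?_⟩
  rw [h, Matrix.smul_mul, Matrix.mul_assoc, ← Matrix.star_eq_conjTranspose,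
    Matrix.mem_unitaryGroup_iff.1 hW, Matrix.mul_one]

/-- **Lemma B.2.** If `a, b` are positive divisors of `d` with `a ∣ b`, and
`u, v` are integers with `gcd(u, v, d/a) = 1`, `u·a·b ≡ a·b (mod d)` and
`gcd(u, d/a, d/b) = 1`, then some unitary `W` satisfies `W X^a W† ≈ X^{ua} Z^{va}` and
`W Z^b W† ≈ Z^b`. -/
theorem exists_unitary_conj_of_divides (d : ℕ) (hd : 2 ≤ d) (a b : ℕ)
    (ha0 : 0 < a) (hb0 : 0 < b) (ha : a ∣ d) (hb : b ∣ d) (hab : a ∣ b)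
    (u v : ℤ)
    (h1 : Int.gcd u (Int.gcd v ((d / a : ℕ) : ℤ) : ℤ) = 1)
    (h2 : u * a * b ≡ (a : ℤ) * b [ZMOD (d : ℤ)])
    (h3 : Int.gcd u (Int.gcd ((d / a : ℕ) : ℤ) ((d / b : ℕ) : ℤ) : ℤ) = 1) :
    ∃ W ∈ Matrix.unitaryGroup (Fin d) ℂ,
      PhaseEq (W * Xpow d (a : ℤ) * Wᴴ) (GPM d (u * a) (v * a)) ∧
      PhaseEq (W * Zpow d (b : ℤ) * Wᴴ) (Zpow d (b : ℤ)) := by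
  have hd0 : d ≠ 0 := by omega
  have ha0' : (0 : ℤ) < a := by exact_mod_cast ha0
  have hdD : (d : ℤ) = a * (d / a : ℕ) := by exact_mod_cast (Nat.mul_div_cancel' ha).symm
  have hdE : (d : ℤ) = b * (d / b : ℕ) := by exact_mod_cast (Nat.mul_div_cancel' hb).symm
  have hDpos : 0 < d / a := Nat.div_pos (Nat.le_of_dvd (by omega) ha) ha0
  generalize d / a = D at *
  generalize d / b = E at *
  obtain ⟨h, hh⟩ : ∃ h, h = Int.gcd u D := ⟨_, rfl⟩
  have hh0 : h ≠ 0 := by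
    rw [hh]
    exact (Int.gcd_pos_of_ne_zero_right _ (by omega)).ne'
  have hhu : (h : ℤ) ∣ u := hh ▸ Int.gcd_dvd_left ..
  have hhD : (h : ℤ) ∣ D := hh ▸ Int.gcd_dvd_right ..
  have hhv : IsCoprime v (h : ℤ) := by
    rw [Int.isCoprime_iff_gcd_eq_one, ← Nat.dvd_one, ← h1]
    have hv := Int.gcd_dvd_left v (h : ℤ)
    have hr := Int.gcd_dvd_right v (h : ℤ)
    exact_mod_cast Int.dvd_coe_gcd (hr.trans hhu) (Int.dvd_coe_gcd hv (hr.trans hhD))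
  have hhE : IsCoprime (E : ℤ) (h : ℤ) := by
    rw [Int.isCoprime_iff_gcd_eq_one, ← Nat.dvd_one, ← h3]
    have hv := Int.gcd_dvd_left (E : ℤ) (h : ℤ)
    have hr := Int.gcd_dvd_right (E : ℤ) (h : ℤ)
    exact_mod_cast Int.dvd_coe_gcd (hr.trans hhu) (Int.dvd_coe_gcd (hr.trans hhD) hv)
  have hgcd : ∀ n : ℤ, (D : ℤ) ∣ u * n → (D : ℤ) ∣ h * n := by
    intro n hn
    rw [hh, Int.gcd_eq_gcd_ab, show (u * Int.gcdA u D + D * Int.gcdB u D) * n =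
      u * n * Int.gcdA u D + D * (Int.gcdB u D * n) by ring]
    exact (hn.mul_right _).add (dvd_mul_right _ _)
  obtain ⟨g, hg⟩ : ∃ g, g = Int.gcd E (a * h) := ⟨_, rfl⟩
  have hgE : (g : ℤ) ∣ E := hg ▸ Int.gcd_dvd_left ..
  have hgah : (g : ℤ) ∣ a * h := hg ▸ Int.gcd_dvd_right ..
  have hg0 : (0 : ℤ) < g := by
    rw [hg, Int.natCast_pos]
    exact Int.gcd_pos_of_ne_zero_right _ (mul_ne_zero ha0'.ne' (by exact_mod_cast hh0))
  have hgh : IsCoprime (g : ℤ) (h : ℤ) := hhE.of_isCoprime_of_dvd_left hgE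
  have hga : (g : ℤ) ∣ a := hgh.dvd_of_dvd_mul_right hgah
  have hbez := Int.gcd_eq_gcd_ab E (a * h)
  rw [← hg] at hbez
  generalize Int.gcdA E (a * h) = z at hbez
  generalize Int.gcdB E (a * h) = y at hbez
  have he : (a : ℤ) * h ∣ E * z - g := ⟨-y, by rw [hbez]; ring⟩
  have heh : IsCoprime (v * (E * z)) (h : ℤ) := by
    refine hhv.mul_left ?_
    rw [show (E : ℤ) * z = g + h * (-(a * y)) by rw [hbez]; ring]
    exact hgh.add_mul_left_left _
  set J : ℤ → ℕ → ℤ := fun s k => s + E * z * (k + (h - 1) * (s / g))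
  set W : Matrix (Fin d) (Fin d) ℂ :=
    Matrix.of fun i c => chainEntry d a D u v h J (i : ℕ) (c : ℕ) with hWdef
  have hW : W ∈ Matrix.unitaryGroup (Fin d) ℂ := by
    rw [Matrix.mem_unitaryGroup_iff']
    ext c c'
    rw [Matrix.mul_apply, Matrix.one_apply]
    simp only [Matrix.star_apply, hWdef, Matrix.of_apply]
    rw [sum_star_chainEntry_mul_eq_ite hd0 ha0' hdD hh0 hhu hhD hgcd heh
      (fun s k => by push_cast; ring)
      (fun _ _ _ _ hs0 hs hs0' hs' hk hk' hdvd =>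
        label_injective hg0 hga he hs0 hs hs0' hs' hk hk' hdvd)
      (by omega) (by omega) (by omega) (by omega)]
    simp only [Nat.cast_inj, Fin.ext_iff]
  refine ⟨W, hW, mul_conjTranspose_phaseEq hW
    (norm_halfRoot_zpow hd0 (v * a * (u * a * (1 - D)))) ?_,
    mul_conjTranspose_phaseEq hW norm_one ?_⟩
  · ext i c
    rw [GPM, Zpow_eq_diagonal_halfRoot hd0, Matrix.smul_apply, Matrix.mul_assoc,
      Matrix.mul_apply, Matrix.mul_apply]
    simp only [Matrix.diagonal_mul, Xpow_apply, hWdef, Matrix.of_apply, mul_ite, mul_one, mul_zero,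
      ite_mul, one_mul, zero_mul, smul_eq_mul]
    rw [Fin.sum_ite_modEq hd0 (fun x => chainEntry d a D u v h J (i : ℕ) x)
      (fun x y hxy => chainEntry_congr_right hd0 ha0'.ne' hdD u v h J _ hxy),
      chainEntry_add hd0 D ha0'.ne']
    congr 1
    rw [← Fin.sum_ite_modEq hd0 (fun x => halfRoot d ^ (2 * (v * a) * x) *
      chainEntry d a D u v h J x (c : ℕ)) (fun x y hxy => ?_)]
    · refine Finset.sum_congr rfl fun l _ => ?_
      refine if_congr ?_ rfl rfl
      rw [Int.modEq_comm, Int.modEq_iff_dvd, Int.modEq_iff_dvd, sub_sub_eq_add_sub]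
    · congr 1
      · obtain ⟨n, hn⟩ := hxy.dvd
        exact halfRoot_zpow_congr hd0 ⟨-(v * a * n), by linear_combination -2 * (v * a) * hn⟩
      · exact chainEntry_congr_left _ _ _ _ _ _ _ hxy
  · ext i c
    rw [Zpow_eq_diagonal_halfRoot hd0, one_smul, Matrix.mul_diagonal, Matrix.diagonal_mul]
    simp only [hWdef, Matrix.of_apply]
    refine chainEntry_mul_root hd0 D v h hdE h2 (fun s k => ?_) _ _
    exact ⟨z * (k + (h - 1) * (s / g)), by change s + _ - s = _; ring⟩
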